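/- arXiv:2505.20621 — 7 statements merged into one kernel-verified Lean document; each statement's English description precedes it below -/
import Mathlib

section
/- Let b > 0, ε ≥ 0, δ ≥ 0, and let μ and ν be Borel probability measures on ℝ, both supported on the interval [0, b] (i.e., μ([0,b]) = ν([0,b]) = 1). If μ satisfies the (ε, δ)-ADP outcomes guarantee relative to ν, then ∫ x dμ(x) ≤ e^ε · (∫ x dν(x)) + b·δ. -/
open MeasureTheory

lemma adp_aux (b : ℝ) (μ : Measure ℝ) [IsProbabilityMeasure μ]
    (h : μ (Set.Icc 0 b) = 1) :
    ∫ x, x ∂μ = ∫ t in Set.Ioc 0 b, μ.real {a : ℝ | t ≤ a} ∧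
    IntegrableOn (fun t : ℝ => μ.real {a : ℝ | t ≤ a}) (Set.Ioc 0 b) := by
  have hae : ∀ᵐ x ∂μ, x ∈ Set.Icc 0 b :=
    (prob_compl_eq_zero_iff measurableSet_Icc).2 h
  have h0 : 0 ≤ᵐ[μ] (fun x : ℝ => x) := by
    filter_upwards [hae] with x hx using hx.1
  have h1 : (fun x : ℝ => x) ≤ᵐ[μ] (fun _ => b) := by
    filter_upwards [hae] with x hx using hx.2
  have hint : Integrable (fun x : ℝ => x) μ := by
    refine Integrable.of_bound measurable_id.aestronglyMeasurable b ?_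
    filter_upwards [hae] with x hx
    rw [Real.norm_eq_abs, abs_of_nonneg hx.1]
    exact hx.2
  refine ⟨hint.integral_eq_integral_Ioc_meas_le h0 h1, ?_⟩
  have hanti : Antitone (fun t : ℝ => μ.real {a : ℝ | t ≤ a}) := by
    intro s t hst
    exact measureReal_mono (fun a (ha : t ≤ a) => hst.trans ha)
  exact ((hanti.antitoneOn (Set.Icc 0 b)).integrableOn_isCompact isCompact_Icc).mono_set
    Set.Ioc_subset_Icc_self

theorem adp_expected_outcomes_upper
    (b ε δ : ℝ) (hb : 0 < b) (hε : 0 ≤ ε) (hδ : 0 ≤ δ)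
    (μ ν : Measure ℝ) [IsProbabilityMeasure μ] [IsProbabilityMeasure ν]
    (hμsupp : μ (Set.Icc 0 b) = 1) (hνsupp : ν (Set.Icc 0 b) = 1)
    (hADP : ∀ S : Set ℝ, MeasurableSet S →
      (μ S).toReal ≤ Real.exp ε * (ν S).toReal + δ) :
    ∫ x, x ∂μ ≤ Real.exp ε * (∫ x, x ∂ν) + b * δ := by
  obtain ⟨e1, i1⟩ := adp_aux b μ hμsupp
  obtain ⟨e2, i2⟩ := adp_aux b ν hνsupp
  have hc : IntegrableOn (fun _ : ℝ => δ) (Set.Ioc 0 b) := by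
    simp [integrableOn_const_iff]
  have hR : ∫ t in Set.Ioc 0 b, (Real.exp ε * ν.real {a : ℝ | t ≤ a} + δ)
      = Real.exp ε * (∫ x, x ∂ν) + b * δ := by
    rw [integral_add (i2.const_mul _) hc, integral_const_mul, e2]
    simp [hb.le]
  rw [e1, ← hR]
  exact integral_mono i1 ((i2.const_mul _).add hc) (fun t => hADP {a | t ≤ a} measurableSet_Ici)
end

section
/- Let b > 0, ε ≥ 0, α > 1, and let μ and ν be Borel probability measures on ℝ, both supported on the interval [0, b]. If μ satisfies the (ε, α)-RDP outcomes guarantee relative to ν, then ∫ x dμ(x) ≤ b^{1/α} · (e^ε · ∫ x dν(x))^{(α−1)/α}. -/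
open MeasureTheory

theorem rdp_layer (b : ℝ) (μ : Measure ℝ) [IsProbabilityMeasure μ]
    (h : μ (Set.Icc 0 b) = 1) :
    ∫ x, x ∂μ = ∫ t in Set.Ioc 0 b, (μ (Set.Ici t)).toReal := by
  have hae : ∀ᵐ x ∂μ, x ∈ Set.Icc 0 b := (prob_compl_eq_zero_iff measurableSet_Icc).2 h
  have hint : Integrable (fun x : ℝ => x) μ := by
    refine Integrable.of_bound measurable_id.aestronglyMeasurable b ?_
    filter_upwards [hae] with x hx
    simpa [Real.norm_eq_abs, abs_of_nonneg hx.1] using hx.2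
  have := hint.integral_eq_integral_Ioc_meas_le (M := b)
    (by filter_upwards [hae] with x hx using hx.1)
    (by filter_upwards [hae] with x hx using hx.2)
  exact this

theorem rdp_expected_outcomes_upper
    (b ε α : ℝ) (hb : 0 < b) (hε : 0 ≤ ε) (hα : 1 < α)
    (μ ν : Measure ℝ) [IsProbabilityMeasure μ] [IsProbabilityMeasure ν]
    (hμsupp : μ (Set.Icc 0 b) = 1) (hνsupp : ν (Set.Icc 0 b) = 1)
    (hRDP : ∀ S : Set ℝ, MeasurableSet S →
      (μ S).toReal ≤ (Real.exp ε * (ν S).toReal) ^ ((α - 1) / α)) :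
    ∫ x, x ∂μ ≤ b ^ (1 / α) * (Real.exp ε * ∫ x, x ∂ν) ^ ((α - 1) / α) := by
  have hα0 : 0 < α := by linarith
  set p := (α - 1) / α with hp
  have hp0 : 0 < p := div_pos (by linarith) hα0
  have hp1 : p ≤ 1 := by rw [hp, div_le_one hα0]; linarith
  have hpa : 1 / α = 1 - p := by rw [hp]; field_simp; ring
  have anti : ∀ ρ : Measure ℝ, IsProbabilityMeasure ρ →
      Antitone (fun t => (ρ (Set.Ici t)).toReal) := by
    intro ρ _ s t hst
    exact ENNReal.toReal_mono (measure_ne_top _ _) (measure_mono (Set.Ici_subset_Ici.2 hst))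
  have intg : ∀ f : ℝ → ℝ, Antitone f → IntegrableOn f (Set.Ioc 0 b) := fun f hf =>
    ((hf.antitoneOn _).integrableOn_isCompact isCompact_Icc).mono_set Set.Ioc_subset_Icc_self
  set f : ℝ → ℝ := fun t => Real.exp ε * (ν (Set.Ici t)).toReal with hf
  have hf0 : ∀ t, 0 ≤ f t := fun t => by positivity
  have fanti : Antitone f := fun s t hst =>
    mul_le_mul_of_nonneg_left (anti ν inferInstance hst) (Real.exp_pos _).le
  have gint : IntegrableOn (fun t => f t ^ p) (Set.Ioc 0 b) :=
    intg _ fun s t hst => Real.rpow_le_rpow (hf0 _) (fanti hst) hp0.le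
  have h1 : ∫ x, x ∂μ ≤ ∫ t in Set.Ioc 0 b, f t ^ p := by
    rw [rdp_layer b μ hμsupp]
    exact integral_mono (intg _ (anti μ inferInstance)) gint fun t => hRDP _ measurableSet_Ici
  have h2 : ∫ t in Set.Ioc 0 b, f t = Real.exp ε * ∫ x, x ∂ν := by
    rw [rdp_layer b ν hνsupp, integral_const_mul]
  have hJ := (Real.concaveOn_rpow hp0.le hp1).le_map_set_average (μ := volume)
    (t := Set.Ioc 0 b) (f := f)
    (Real.continuous_rpow_const hp0.le).continuousOn isClosed_Ici
    (by simp [hb]) (by simp) (ae_of_all _ hf0) (intg _ fanti) gint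
  rw [← h2]
  refine h1.trans ?_
  rw [setAverage_eq, setAverage_eq] at hJ
  simp only [Real.volume_real_Ioc_of_le hb.le, sub_zero, smul_eq_mul] at hJ
  have hI : 0 ≤ ∫ t in Set.Ioc 0 b, f t := integral_nonneg hf0
  rw [Real.mul_rpow (by positivity) hI, Real.inv_rpow hb.le] at hJ
  rw [hpa, Real.rpow_sub hb, Real.rpow_one]
  have := mul_le_mul_of_nonneg_left hJ hb.le
  rw [mul_inv_cancel_left₀ hb.ne'] at this
  rw [div_eq_mul_inv, mul_assoc]
  exact this
end

section
/- Let b > 0, ε ≥ 0, α > 1, and let μ and ν be Borel probability measures on ℝ, both supported on the interval [0, b]. If ν satisfies the (ε, α)-RDP outcomes guarantee relative to μ, then ∫ x dμ(x) ≥ e^{−ε} · (b^{−1/α} · ∫ x dν(x))^{α/(α−1)}. -/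
open MeasureTheory

lemma aux_layer (b : ℝ) (μ : Measure ℝ) [IsProbabilityMeasure μ]
    (h : μ (Set.Icc 0 b) = 1) :
    0 ≤ ∫ x, x ∂μ ∧ ∫ x, x ∂μ = ∫ t in Set.Ioc 0 b, μ.real (Set.Ici t) := by
  have hae : ∀ᵐ x ∂μ, x ∈ Set.Icc 0 b := (mem_ae_iff_prob_eq_one measurableSet_Icc).2 h
  have h0 : (0 : ℝ → ℝ) ≤ᵐ[μ] fun x => x := hae.mono fun x hx => hx.1
  have h1 : (fun x : ℝ => x) ≤ᵐ[μ] fun _ => b := hae.mono fun x hx => hx.2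
  have hi : Integrable (fun x : ℝ => x) μ := by
    refine Integrable.of_bound measurable_id.aestronglyMeasurable b ?_
    filter_upwards [hae] with x hx
    rw [Real.norm_eq_abs, abs_of_nonneg hx.1]
    exact hx.2
  exact ⟨integral_nonneg_of_ae h0, hi.integral_eq_integral_Ioc_meas_le h0 h1⟩

theorem rdp_expected_outcomes_lower
    (b ε α : ℝ) (hb : 0 < b) (hε : 0 ≤ ε) (hα : 1 < α)
    (μ ν : Measure ℝ) [IsProbabilityMeasure μ] [IsProbabilityMeasure ν]
    (hμsupp : μ (Set.Icc 0 b) = 1) (hνsupp : ν (Set.Icc 0 b) = 1)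
    (hRDP : ∀ S : Set ℝ, MeasurableSet S →
      (ν S).toReal ≤ (Real.exp ε * (μ S).toReal) ^ ((α - 1) / α)) :
    ∫ x, x ∂μ ≥ Real.exp (-ε) * (b ^ (-1 / α) * ∫ x, x ∂ν) ^ (α / (α - 1)) := by
  obtain ⟨hm0, hm⟩ := aux_layer b μ hμsupp
  obtain ⟨hn0, hn⟩ := aux_layer b ν hνsupp
  set M := ∫ x, x ∂μ
  set N := ∫ x, x ∂ν
  have hα0 : 0 < α := by linarith
  have hα1 : 0 < α - 1 := by linarith
  have hp0 : 0 < (α - 1) / α := by positivity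
  have hp1 : (α - 1) / α ≤ 1 := by rw [div_le_one hα0]; linarith
  set p := (α - 1) / α with hp
  have hpi : α / (α - 1) = p⁻¹ := by rw [hp, inv_div]
  have hb1 : b ^ (-1 / α) = b ^ (p - 1) := by congr 1; rw [hp]; field_simp; ring
  have hanti : ∀ ρ : Measure ℝ, IsProbabilityMeasure ρ → Antitone fun t => ρ.real (Set.Ici t) :=
    fun ρ _ s t hst => measureReal_mono (Set.Ici_subset_Ici.2 hst)
  have hfin : volume (Set.Ioc 0 b) ≠ ⊤ := by simp
  have hint : ∀ ρ : Measure ℝ, IsProbabilityMeasure ρ →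
      IntegrableOn (fun t => ρ.real (Set.Ici t)) (Set.Ioc 0 b) := fun ρ _ =>
    ((hanti ρ inferInstance).locallyIntegrable.integrableOn_isCompact
      (isCompact_Icc (a := 0) (b := b))).mono_set Set.Ioc_subset_Icc_self
  have hint1 : IntegrableOn (fun t => Real.exp ε * μ.real (Set.Ici t)) (Set.Ioc 0 b) :=
    (hint μ inferInstance).const_mul _
  have hanti2 : Antitone fun t => (Real.exp ε * μ.real (Set.Ici t)) ^ p := fun s t hst =>
    Real.rpow_le_rpow (by positivity)
      (mul_le_mul_of_nonneg_left (hanti μ inferInstance hst) (Real.exp_pos _).le) hp0.le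
  have hint2 : IntegrableOn (fun t => (Real.exp ε * μ.real (Set.Ici t)) ^ p) (Set.Ioc 0 b) :=
    (hanti2.locallyIntegrable.integrableOn_isCompact
      (isCompact_Icc (a := 0) (b := b))).mono_set Set.Ioc_subset_Icc_self
  have hN : N ≤ ∫ t in Set.Ioc 0 b, (Real.exp ε * μ.real (Set.Ici t)) ^ p := by
    rw [hn]
    exact integral_mono (hint ν inferInstance) hint2 fun t => hRDP _ measurableSet_Ici
  have hJ := (Real.concaveOn_rpow hp0.le hp1).le_map_set_average
    (Real.continuous_rpow_const hp0.le).continuousOn isClosed_Ici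
    (by simp [hb]) hfin
    (Filter.Eventually.of_forall fun t => by
      show (0:ℝ) ≤ Real.exp ε * μ.real (Set.Ici t)
      positivity) hint1 hint2
  simp only [setAverage_eq, Function.comp_def] at hJ
  rw [integral_const_mul, ← hm] at hJ
  simp only [Real.volume_real_Ioc_of_le hb.le, sub_zero, smul_eq_mul] at hJ
  have hkey : b ^ (p - 1) * N ≤ (Real.exp ε * M) ^ p := by
    have h1 : b⁻¹ * N ≤ (b⁻¹ * (Real.exp ε * M)) ^ p :=
      (mul_le_mul_of_nonneg_left hN (by positivity)).trans hJ
    rw [Real.mul_rpow (by positivity) (by positivity), Real.inv_rpow hb.le] at h1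
    have hbp : 0 < b ^ p := by positivity
    have h2 := mul_le_mul_of_nonneg_left h1 hbp.le
    rw [← mul_assoc, ← mul_assoc, mul_inv_cancel₀ hbp.ne', one_mul] at h2
    rwa [Real.rpow_sub hb, Real.rpow_one, div_eq_mul_inv]
  have h3 : (b ^ (p - 1) * N) ^ p⁻¹ ≤ Real.exp ε * M := by
    have := Real.rpow_le_rpow (by positivity) hkey (inv_nonneg.2 hp0.le)
    rwa [Real.rpow_rpow_inv (by positivity) hp0.ne'] at this
  rw [hpi, hb1, ge_iff_le]
  calc _ ≤ Real.exp (-ε) * (Real.exp ε * M) :=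
        mul_le_mul_of_nonneg_left h3 (Real.exp_pos _).le
    _ = M := by rw [← mul_assoc, ← Real.exp_add]; simp
end

section
/- Let Ω be a measurable space, let μ and ν be probability measures on Ω, let b > 0, ε ≥ 0, δ ≥ 0, and let f : Ω → ℝ be a measurable function with 0 ≤ f(ω) ≤ b for all ω ∈ Ω. If ν satisfies the (ε, δ)-ADP outcomes guarantee relative to μ (i.e., ν(S) ≤ e^ε · μ(S) + δ for every measurable S ⊆ Ω), then ∫ f dμ ≥ e^{−ε} · ((∫ f dν) − b·δ). (Policy-level robustness for ADP: the expected cumulative reward of a policy trained on a poisoned dataset is lower-bounded by e^{−ε}(J(π) − bδ), where J(π) is the expected cumulative reward of the clean policy.) -/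
open MeasureTheory

theorem adp_policy_level_robustness
    {Ω : Type*} [MeasurableSpace Ω]
    (μ ν : Measure Ω) [IsProbabilityMeasure μ] [IsProbabilityMeasure ν]
    (b ε δ : ℝ) (hb : 0 < b) (hε : 0 ≤ ε) (hδ : 0 ≤ δ)
    (f : Ω → ℝ) (hf : Measurable f)
    (hf0 : ∀ ω, 0 ≤ f ω) (hfb : ∀ ω, f ω ≤ b)
    (hADP : ∀ S : Set Ω, MeasurableSet S →
      (ν S).toReal ≤ Real.exp ε * (μ S).toReal + δ) :
    ∫ ω, f ω ∂μ ≥ Real.exp (-ε) * ((∫ ω, f ω ∂ν) - b * δ) := by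
  have hint : ∀ (ρ : Measure Ω) [IsProbabilityMeasure ρ], Integrable f ρ := by
    intro ρ _
    refine Integrable.of_bound hf.aestronglyMeasurable b (Filter.Eventually.of_forall fun ω => ?_)
    rw [Real.norm_eq_abs, abs_of_nonneg (hf0 ω)]
    exact hfb ω
  have hlc : ∀ (ρ : Measure Ω) [IsProbabilityMeasure ρ],
      ∫ ω, f ω ∂ρ = ∫ t in Set.Ioc 0 b, ρ.real {a : Ω | t ≤ f a} := by
    intro ρ _
    exact (hint ρ).integral_eq_integral_Ioc_meas_le (Filter.Eventually.of_forall hf0)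
      (Filter.Eventually.of_forall hfb)
  have hti : ∀ (ρ : Measure Ω) [IsProbabilityMeasure ρ],
      IntegrableOn (fun t => ρ.real {a : Ω | t ≤ f a}) (Set.Ioc 0 b) := by
    intro ρ _
    have ha : Antitone (fun t => ρ.real {a : Ω | t ≤ f a}) := by
      intro s t hst
      exact measureReal_mono (fun a (h : t ≤ f a) => le_trans hst h)
    refine Integrable.of_bound ha.measurable.aestronglyMeasurable 1
      (Filter.Eventually.of_forall fun t => ?_)
    rw [Real.norm_eq_abs, abs_of_nonneg measureReal_nonneg]
    exact measureReal_le_one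
  have key : ∫ ω, f ω ∂ν ≤ Real.exp ε * (∫ ω, f ω ∂μ) + b * δ := by
    rw [hlc ν, hlc μ]
    have hc : IntegrableOn (fun _ : ℝ => δ) (Set.Ioc 0 b) := by
      exact integrable_const δ
    have h1 : ∫ t in Set.Ioc 0 b, ν.real {a : Ω | t ≤ f a} ≤
        ∫ t in Set.Ioc 0 b, (Real.exp ε * μ.real {a : Ω | t ≤ f a} + δ) :=
      integral_mono (hti ν) (((hti μ).const_mul _).add hc)
        (fun t => hADP _ (measurableSet_le measurable_const hf))
    rw [integral_add ((hti μ).const_mul _) hc, integral_const_mul] at h1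
    simpa [hb.le] using h1
  have h2 : Real.exp (-ε) * Real.exp ε = 1 := by rw [← Real.exp_add]; simp
  have h3 := mul_le_mul_of_nonneg_left key (Real.exp_pos (-ε)).le
  rw [mul_add, ← mul_assoc, h2] at h3
  rw [ge_iff_le, mul_sub]
  linarith
end

section
/- Let Ω be a measurable space, let μ and ν be probability measures on Ω, let b > 0, ε ≥ 0, α > 1, and let f : Ω → ℝ be a measurable function with 0 ≤ f(ω) ≤ b for all ω ∈ Ω. If ν satisfies the (ε, α)-RDP outcomes guarantee relative to μ (i.e., ν(S) ≤ (e^ε · μ(S))^{(α−1)/α} for every measurable S ⊆ Ω), then ∫ f dμ ≥ e^{−ε} · (b^{−1/α} · ∫ f dν)^{α/(α−1)}. (Policy-level robustness for RDP.) -/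
open MeasureTheory

theorem rdp_policy_level_robustness
    {Ω : Type*} [MeasurableSpace Ω]
    (μ ν : Measure Ω) [IsProbabilityMeasure μ] [IsProbabilityMeasure ν]
    (b ε α : ℝ) (hb : 0 < b) (hε : 0 ≤ ε) (hα : 1 < α)
    (f : Ω → ℝ) (hf : Measurable f)
    (hf0 : ∀ ω, 0 ≤ f ω) (hfb : ∀ ω, f ω ≤ b)
    (hRDP : ∀ S : Set Ω, MeasurableSet S →
      (ν S).toReal ≤ (Real.exp ε * (μ S).toReal) ^ ((α - 1) / α)) :
    ∫ ω, f ω ∂μ ≥ Real.exp (-ε) * (b ^ (-1 / α) * ∫ ω, f ω ∂ν) ^ (α / (α - 1)) := by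
  have hα0 : 0 < α := by linarith
  have hα1 : 0 < α - 1 := by linarith
  have hint : ∀ (m : Measure Ω) [IsProbabilityMeasure m], Integrable f m := fun m _ =>
    Integrable.of_bound hf.aestronglyMeasurable b
      (Filter.Eventually.of_forall fun ω => by
        rw [Real.norm_eq_abs, abs_of_nonneg (hf0 ω)]; exact hfb ω)
  have hlc : ∀ (m : Measure Ω) [IsProbabilityMeasure m],
      ∫ ω, f ω ∂m = ∫ t in Set.Ioc 0 b, m.real {a | t ≤ f a} := fun m _ =>
    (hint m).integral_eq_integral_Ioc_meas_le (Filter.Eventually.of_forall hf0)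
      (Filter.Eventually.of_forall hfb)
  have hmeas : ∀ (m : Measure Ω) [IsProbabilityMeasure m],
      Measurable fun t : ℝ => m.real {a | t ≤ f a} := fun m _ =>
    Antitone.measurable fun s t hst =>
      measureReal_mono (fun a (ha : t ≤ f a) => le_trans hst ha)
  have hpq : α.HolderConjugate (α / (α - 1)) := Real.HolderConjugate.conjExponent hα
  set g : ℝ → ℝ := fun t => (Real.exp ε * μ.real {a | t ≤ f a}) ^ ((α - 1) / α) with hg
  have hg0 : ∀ t, 0 ≤ g t := fun t => by positivity
  have hgm : Measurable g := ((hmeas μ).const_mul _).pow_const _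
  have hgb : ∀ t, ‖g t‖ ≤ (Real.exp ε) ^ ((α - 1) / α) := fun t => by
    rw [Real.norm_eq_abs, abs_of_nonneg (hg0 t)]
    apply Real.rpow_le_rpow (by positivity) _ (by positivity)
    exact mul_le_of_le_one_right (Real.exp_pos _).le measureReal_le_one
  have hgq : ∀ t, g t ^ (α / (α - 1)) = Real.exp ε * μ.real {a | t ≤ f a} := fun t => by
    rw [hg]
    simp only
    rw [← Real.rpow_mul (by positivity)]
    have : (α - 1) / α * (α / (α - 1)) = 1 := by field_simp
    rw [this, Real.rpow_one]
  have h1 : ∫ ω, f ω ∂ν ≤ ∫ t in Set.Ioc 0 b, (1 : ℝ) * g t := by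
    rw [hlc ν]
    simp only [one_mul]
    apply integral_mono
    · exact Integrable.of_bound (hmeas ν).aestronglyMeasurable 1
        (Filter.Eventually.of_forall fun t => by
          rw [Real.norm_eq_abs, abs_of_nonneg measureReal_nonneg]; exact measureReal_le_one)
    · exact Integrable.of_bound hgm.aestronglyMeasurable _ (Filter.Eventually.of_forall hgb)
    · intro t
      exact hRDP _ (measurableSet_le measurable_const hf)
  have h2 := integral_mul_le_Lp_mul_Lq_of_nonneg (μ := volume.restrict (Set.Ioc 0 b)) hpq
    (f := fun _ => (1 : ℝ)) (g := g)
    (Filter.Eventually.of_forall fun _ => zero_le_one) (Filter.Eventually.of_forall hg0)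
    (memLp_const _)
    (MemLp.of_bound hgm.aestronglyMeasurable _ (Filter.Eventually.of_forall hgb))
  have h3 : ∫ t in Set.Ioc 0 b, g t ^ (α / (α - 1)) = Real.exp ε * ∫ ω, f ω ∂μ := by
    simp only [hgq]
    rw [integral_const_mul, ← hlc μ]
  rw [h3] at h2
  simp only [Real.one_rpow, integral_const, smul_eq_mul, mul_one, measureReal_restrict_apply_univ,
    Real.volume_real_Ioc_of_le hb.le, sub_zero] at h2
  have hM : 0 ≤ ∫ ω, f ω ∂μ := integral_nonneg hf0
  have hN : 0 ≤ ∫ ω, f ω ∂ν := integral_nonneg hf0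
  have h4 : b ^ (-1 / α) * ∫ ω, f ω ∂ν
      ≤ (Real.exp ε * ∫ ω, f ω ∂μ) ^ (1 / (α / (α - 1))) := by
    calc b ^ (-1 / α) * ∫ ω, f ω ∂ν
        ≤ b ^ (-1 / α) * (b ^ (1 / α) * (Real.exp ε * ∫ ω, f ω ∂μ) ^ (1 / (α / (α - 1)))) :=
          mul_le_mul_of_nonneg_left (h1.trans h2) (by positivity)
      _ = _ := by
          rw [← mul_assoc, ← Real.rpow_add hb]
          have : -1 / α + 1 / α = 0 := by ring
          rw [this, Real.rpow_zero, one_mul]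
  have h5 := Real.rpow_le_rpow (by positivity) h4 (show 0 ≤ α / (α - 1) by positivity)
  rw [← Real.rpow_mul (by positivity), one_div_mul_cancel (by positivity), Real.rpow_one] at h5
  calc _ ≤ Real.exp (-ε) * (Real.exp ε * ∫ ω, f ω ∂μ) :=
        mul_le_mul_of_nonneg_left h5 (Real.exp_pos _).le
    _ = _ := by rw [← mul_assoc, ← Real.exp_add]; simp
end

section
/- Let a < 0 < b be real numbers, ε ≥ 0, δ ≥ 0, and let μ and ν be Borel probability measures on ℝ, both supported on the interval [a, b]. Suppose both μ(S) ≤ e^ε · ν(S) + δ and ν(S) ≤ e^ε · μ(S) + δ hold for every Borel set S ⊆ ℝ. Write E_ν⁺ = ∫ max(x, 0) dν(x) and E_ν⁻ = ∫ max(−x, 0) dν(x). Then ∫ x dμ(x) ≥ e^{−ε} · (E_ν⁺ − b·δ) − (e^ε · E_ν⁻ − a·δ). (Real-valued expected outcomes guarantee, ADP lower bound.) -/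
open MeasureTheory

theorem adp_aux_s12 (M ε δ : ℝ) (hM : 0 ≤ M)
    (μ ν : Measure ℝ) [IsProbabilityMeasure μ] [IsProbabilityMeasure ν]
    (f : ℝ → ℝ) (hf : Measurable f) (h0 : ∀ x, 0 ≤ f x)
    (hμ : ∀ᵐ x ∂μ, f x ≤ M) (hν : ∀ᵐ x ∂ν, f x ≤ M)
    (h : ∀ S : Set ℝ, MeasurableSet S →
      (μ S).toReal ≤ Real.exp ε * (ν S).toReal + δ) :
    Integrable f μ ∧ ∫ x, f x ∂μ ≤ Real.exp ε * (∫ x, f x ∂ν) + M * δ := by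
  have hI : ∀ (ρ : Measure ℝ) [IsProbabilityMeasure ρ], (∀ᵐ x ∂ρ, f x ≤ M) → Integrable f ρ := by
    intro ρ _ hρ
    refine Integrable.of_bound hf.aestronglyMeasurable M ?_
    filter_upwards [hρ] with x hx
    rw [Real.norm_of_nonneg (h0 x)]
    exact hx
  have hanti : ∀ (ρ : Measure ℝ) [IsProbabilityMeasure ρ],
      IntegrableOn (fun t => ρ.real {x | t ≤ f x}) (Set.Ioc 0 M) volume := by
    intro ρ _
    have : Antitone (fun t => ρ.real {x | t ≤ f x}) := by
      intro s t hst
      exact measureReal_mono (fun x hx => le_trans hst hx)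
    exact ((this.antitoneOn _).integrableOn_isCompact isCompact_Icc).mono_set
      Set.Ioc_subset_Icc_self
  refine ⟨hI μ hμ, ?_⟩
  rw [(hI μ hμ).integral_eq_integral_Ioc_meas_le (Filter.Eventually.of_forall h0) hμ,
    (hI ν hν).integral_eq_integral_Ioc_meas_le (Filter.Eventually.of_forall h0) hν]
  calc _ ≤ ∫ t in Set.Ioc 0 M, (Real.exp ε * ν.real {x | t ≤ f x} + δ) := by
        refine integral_mono (hanti μ) (((hanti ν).const_mul _).add (integrable_const _)) ?_
        intro t
        exact h _ (measurableSet_le measurable_const hf)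
    _ = _ := by
        rw [integral_add ((hanti ν).const_mul _) (integrable_const _), integral_const_mul]
        simp [hM]

theorem adp_real_valued_expected_outcomes_lower
    (a b ε δ : ℝ) (ha : a < 0) (hb : 0 < b) (hε : 0 ≤ ε) (hδ : 0 ≤ δ)
    (μ ν : Measure ℝ) [IsProbabilityMeasure μ] [IsProbabilityMeasure ν]
    (hμsupp : μ (Set.Icc a b) = 1) (hνsupp : ν (Set.Icc a b) = 1)
    (h₁ : ∀ S : Set ℝ, MeasurableSet S →
      (μ S).toReal ≤ Real.exp ε * (ν S).toReal + δ)
    (h₂ : ∀ S : Set ℝ, MeasurableSet S →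
      (ν S).toReal ≤ Real.exp ε * (μ S).toReal + δ) :
    ∫ x, x ∂μ ≥
      Real.exp (-ε) * ((∫ x, max x 0 ∂ν) - b * δ)
        - (Real.exp ε * (∫ x, max (-x) 0 ∂ν) - a * δ) := by
  have aμ : ∀ᵐ x ∂μ, x ∈ Set.Icc a b := (prob_compl_eq_zero_iff measurableSet_Icc).2 hμsupp
  have aν : ∀ᵐ x ∂ν, x ∈ Set.Icc a b := (prob_compl_eq_zero_iff measurableSet_Icc).2 hνsupp
  obtain ⟨-, p⟩ := adp_aux_s12 b ε δ hb.le ν μ (fun x => max x 0) (by fun_prop)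
    (fun x => le_max_right _ _) (aν.mono fun x hx => max_le hx.2 hb.le)
    (aμ.mono fun x hx => max_le hx.2 hb.le) h₂
  obtain ⟨ip, -⟩ := adp_aux_s12 b ε δ hb.le μ ν (fun x => max x 0) (by fun_prop)
    (fun x => le_max_right _ _) (aμ.mono fun x hx => max_le hx.2 hb.le)
    (aν.mono fun x hx => max_le hx.2 hb.le) h₁
  obtain ⟨im, m⟩ := adp_aux_s12 (-a) ε δ (by linarith) μ ν (fun x => max (-x) 0) (by fun_prop)
    (fun x => le_max_right _ _)
    (aμ.mono fun x hx => max_le (by linarith [hx.1]) (by linarith))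
    (aν.mono fun x hx => max_le (by linarith [hx.1]) (by linarith)) h₁
  have e : ∫ x, x ∂μ = (∫ x, max x 0 ∂μ) - ∫ x, max (-x) 0 ∂μ := by
    rw [← integral_sub ip im]
    congr 1
    ext x
    rcases le_total x 0 with hx | hx
    · rw [max_eq_right hx, max_eq_left (by linarith)]; ring
    · rw [max_eq_left hx, max_eq_right (by linarith)]; ring
  have q : Real.exp (-ε) * ((∫ x, max x 0 ∂ν) - b * δ) ≤ ∫ x, max x 0 ∂μ := by
    rw [Real.exp_neg, inv_mul_le_iff₀ (Real.exp_pos _)]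
    linarith
  rw [e]
  linarith
end

section
/- Let a < 0 < b be real numbers, ε ≥ 0, α > 1, and let μ and ν be Borel probability measures on ℝ, both supported on the interval [a, b]. Suppose both μ(S) ≤ (e^ε · ν(S))^{(α−1)/α} and ν(S) ≤ (e^ε · μ(S))^{(α−1)/α} hold for every Borel set S ⊆ ℝ. Write E_ν⁺ = ∫ max(x, 0) dν(x) and E_ν⁻ = ∫ max(−x, 0) dν(x). Then ∫ x dμ(x) ≥ e^{−ε} · (b^{−1/α} · E_ν⁺)^{α/(α−1)} − (−a)^{1/α} · (e^ε · E_ν⁻)^{(α−1)/α}. (Real-valued expected outcomes guarantee, RDP lower bound.) -/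
open MeasureTheory

theorem rdp_aux (P Q : Measure ℝ) [IsProbabilityMeasure P] [IsProbabilityMeasure Q]
    (f : ℝ → ℝ) (hf : Measurable f) (M c p : ℝ) (hM : 0 < M) (hc : 0 ≤ c)
    (hp0 : 0 < p) (hp1 : p < 1) (h0 : ∀ x, 0 ≤ f x)
    (hP : ∀ᵐ x ∂P, f x ≤ M) (hQ : ∀ᵐ x ∂Q, f x ≤ M)
    (h : ∀ S : Set ℝ, MeasurableSet S → (P S).toReal ≤ (c * (Q S).toReal) ^ p) :
    Integrable f P ∧ ∫ x, f x ∂P ≤ M ^ (1 - p) * (c * ∫ x, f x ∂Q) ^ p := by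
  have hint : ∀ (W : Measure ℝ) [IsProbabilityMeasure W], (∀ᵐ x ∂W, f x ≤ M) →
      Integrable f W := by
    intro W _ hR
    refine Integrable.of_bound hf.aestronglyMeasurable M ?_
    filter_upwards [hR] with x hx
    rw [Real.norm_eq_abs, abs_of_nonneg (h0 x)]; exact hx
  have iP := hint P hP
  have iQ := hint Q hQ
  refine ⟨iP, ?_⟩
  rw [iP.integral_eq_integral_Ioc_meas_le (Filter.Eventually.of_forall h0) hP,
    iQ.integral_eq_integral_Ioc_meas_le (Filter.Eventually.of_forall h0) hQ]
  have anti : ∀ (W : Measure ℝ) [IsProbabilityMeasure W],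
      Antitone (fun t => W.real {a | t ≤ f a}) := by
    intro W _ s t hst
    exact measureReal_mono (fun x hx => le_trans hst hx)
  have antig : Antitone (fun t => c * Q.real {a | t ≤ f a}) :=
    fun s t hst => mul_le_mul_of_nonneg_left (anti Q hst) hc
  have nn : ∀ t, 0 ≤ c * Q.real {a | t ≤ f a} := fun t => mul_nonneg hc measureReal_nonneg
  have antigp : Antitone (fun t => (c * Q.real {a | t ≤ f a}) ^ p) :=
    fun s t hst => Real.rpow_le_rpow (nn t) (antig hst) hp0.le
  have io : ∀ g : ℝ → ℝ, Antitone g → IntegrableOn g (Set.Ioc 0 M) := by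
    intro g hg
    exact ((hg.antitoneOn (Set.Icc 0 M)).integrableOn_isCompact isCompact_Icc).mono_set
      Set.Ioc_subset_Icc_self
  have s1 : ∫ t in Set.Ioc 0 M, P.real {a | t ≤ f a} ≤
      ∫ t in Set.Ioc 0 M, (c * Q.real {a | t ≤ f a}) ^ p := by
    refine integral_mono (io _ (anti P)) (io _ antigp) ?_
    intro t
    exact h _ (measurableSet_le measurable_const hf)
  refine s1.trans ?_
  have vol : volume.real (Set.Ioc 0 M) = M := by simp [measureReal_def, hM.le]
  have J := (Real.concaveOn_rpow hp0.le hp1.le).le_map_set_average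
    (μ := volume) (t := Set.Ioc 0 M) (f := fun t => c * Q.real {a | t ≤ f a})
    (Real.continuous_rpow_const hp0.le).continuousOn isClosed_Ici
    (by simp [hM]) (by simp) (Filter.Eventually.of_forall nn) (io _ antig) (io _ antigp)
  rw [setAverage_eq, setAverage_eq, vol, integral_const_mul, smul_eq_mul, smul_eq_mul] at J
  set I := ∫ t in Set.Ioc 0 M, Q.real {a | t ≤ f a} with hI
  have I0 : 0 ≤ I := integral_nonneg (fun t => measureReal_nonneg)
  rw [Real.mul_rpow (by positivity) (by positivity), Real.inv_rpow hM.le] at J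
  rw [Real.rpow_sub hM, Real.rpow_one]
  have := mul_le_mul_of_nonneg_left J hM.le
  rw [← mul_assoc, mul_inv_cancel₀ hM.ne', one_mul] at this
  rw [div_eq_mul_inv, mul_assoc]
  exact this

theorem rdp_real_valued_expected_outcomes_lower
    (a b ε α : ℝ) (ha : a < 0) (hb : 0 < b) (hε : 0 ≤ ε) (hα : 1 < α)
    (μ ν : Measure ℝ) [IsProbabilityMeasure μ] [IsProbabilityMeasure ν]
    (hμsupp : μ (Set.Icc a b) = 1) (hνsupp : ν (Set.Icc a b) = 1)
    (h₁ : ∀ S : Set ℝ, MeasurableSet S →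
      (μ S).toReal ≤ (Real.exp ε * (ν S).toReal) ^ ((α - 1) / α))
    (h₂ : ∀ S : Set ℝ, MeasurableSet S →
      (ν S).toReal ≤ (Real.exp ε * (μ S).toReal) ^ ((α - 1) / α)) :
    ∫ x, x ∂μ ≥
      Real.exp (-ε) * (b ^ (-1 / α) * ∫ x, max x 0 ∂ν) ^ (α / (α - 1))
        - (-a) ^ (1 / α) * (Real.exp ε * ∫ x, max (-x) 0 ∂ν) ^ ((α - 1) / α) := by
  have α0 : 0 < α := by linarith
  have α1 : 0 < α - 1 := by linarith
  have hp0 : 0 < (α - 1) / α := by positivity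
  have hp1 : (α - 1) / α < 1 := by rw [div_lt_one α0]; linarith
  have e1 : 1 - (α - 1) / α = 1 / α := by field_simp; ring
  have aeμ : ∀ᵐ x ∂μ, x ∈ Set.Icc a b := (prob_compl_eq_zero_iff measurableSet_Icc).2 hμsupp
  have aeν : ∀ᵐ x ∂ν, x ∈ Set.Icc a b := (prob_compl_eq_zero_iff measurableSet_Icc).2 hνsupp
  have pb : ∀ x ∈ Set.Icc a b, max x 0 ≤ b := fun x hx => max_le hx.2 hb.le
  have nb : ∀ x ∈ Set.Icc a b, max (-x) 0 ≤ -a :=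
    fun x hx => max_le (by linarith [hx.1]) (by linarith)
  have mp : Measurable (fun x : ℝ => max x 0) := by fun_prop
  have mn : Measurable (fun x : ℝ => max (-x) 0) := by fun_prop
  obtain ⟨iν, K1⟩ := rdp_aux ν μ _ mp b (Real.exp ε) _ hb (Real.exp_pos _).le hp0 hp1
    (fun x => le_max_right _ _) (aeν.mono pb) (aeμ.mono pb) h₂
  obtain ⟨ip, -⟩ := rdp_aux μ ν _ mp b (Real.exp ε) _ hb (Real.exp_pos _).le hp0 hp1
    (fun x => le_max_right _ _) (aeμ.mono pb) (aeν.mono pb) h₁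
  obtain ⟨im, K2⟩ := rdp_aux μ ν _ mn (-a) (Real.exp ε) _ (by linarith) (Real.exp_pos _).le hp0 hp1
    (fun x => le_max_right _ _) (aeμ.mono nb) (aeν.mono nb) h₁
  rw [e1] at K1 K2
  have split : ∫ x, x ∂μ = ∫ x, max x 0 ∂μ - ∫ x, max (-x) 0 ∂μ := by
    rw [← integral_sub ip im]
    congr 1; ext x
    rcases le_total 0 x with hx | hx
    · rw [max_eq_left hx, max_eq_right (by linarith)]; ring
    · rw [max_eq_right hx, max_eq_left (by linarith)]; ring
  have A0 : 0 ≤ ∫ x, max x 0 ∂μ := integral_nonneg (fun x => le_max_right _ _)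
  have B0 : 0 ≤ ∫ x, max x 0 ∂ν := integral_nonneg (fun x => le_max_right _ _)
  set A := ∫ x, max x 0 ∂μ
  set B := ∫ x, max x 0 ∂ν
  have K3 : b ^ (-1 / α) * B ≤ (Real.exp ε * A) ^ ((α - 1) / α) := by
    rw [neg_div, Real.rpow_neg hb.le, inv_mul_le_iff₀ (by positivity)]
    exact K1
  have K4 : (b ^ (-1 / α) * B) ^ (α / (α - 1)) ≤ Real.exp ε * A := by
    refine (Real.rpow_le_rpow (by positivity) K3 (by positivity)).trans_eq ?_
    rw [← Real.rpow_mul (by positivity), div_mul_div_cancel₀ α0.ne', div_self α1.ne', Real.rpow_one]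
  have K5 : Real.exp (-ε) * (b ^ (-1 / α) * B) ^ (α / (α - 1)) ≤ A := by
    rw [Real.exp_neg, inv_mul_le_iff₀ (by positivity)]
    exact K4
  rw [split]
  linarith
end
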